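/- Let Γ be a play-once DG game satisfying the normalization: every non-terminal position v has N⁺(v) ⊄ T and |N⁺(v) ∩ T| ≤ 1. Then Γ has a non-terminal Nash equilibrium (a NE σ with g(σ) = ∞) if and only if the induced subgraph G[W] contains a directed cycle, where S = { v ∈ V∖T : N⁺(v) ∩ T ≠ ∅ and a(v) ≻_{i(v)} ∞ } (a(v) being the unique terminal in N⁺(v) ∩ T) and W is the set of positions reachable from v₀ by a directed path in the induced subgraph G[V∖S]. -/

import Mathlib

/-!
A non-terminal equilibrium exists exactly when there is a set `C` of positions outside `S` that
contains the initial one and from each of whose positions the play can be continued inside `C`.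

If `σ` is a non-terminal equilibrium, its play is such a set: the player of a visited position in
`S` could redirect it to a terminal preferred to `∞`. Conversely, given `C`, let `σ` move inside `C`
from the positions of `C` and to any non-terminal elsewhere. No move of `σ` enters a terminal, so a
deviating player ends the play only by moving directly to a terminal from his single position `y`.
The deviation changes nothing before `y` is first visited, so `y` is already visited by the play of
`σ`; hence `y ∈ C` lies outside `S`, and the deviation does not pay.

If `W` is finite, such a `C` yields a cycle, since `C ∩ W` can again be continued within itself.
Conversely, the positions from which a given cycle of `G[W]` can be reached in `G[V∖S]` form such a
set.
-/

open Classical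

/-- A deterministic graphical (DG) game on vertex (position) set `V` with player set `ι`.
`adj` is the move relation of the digraph; terminals are exactly the vertices of
out-degree `0`.  `owner x` is the player controlling position `x` (irrelevant for
terminals), `init` is the initial position, and `pref i x y` means that player `i`
strictly prefers outcome `x` to outcome `y`, where outcomes are encoded as
`Option V`: `some t` for a terminal `t` and `none` for the infinite outcome `∞`. -/
structure DGGame (V : Type*) (ι : Type*) where
  adj : V → V → Prop
  owner : V → ι
  init : V
  pref : ι → Option V → Option V → Prop

namespace DGGame

variable {V ι : Type*} (Γ : DGGame V ι)

/-- A terminal position: no outgoing moves. -/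
def Terminal (x : V) : Prop := ∀ y, ¬ Γ.adj x y

/-- The set of outcomes `A = T ∪ {∞}`. -/
def OutcomeSet : Set (Option V) := {x | x = none ∨ ∃ t, Γ.Terminal t ∧ x = some t}

/-- The preferences of each player form a strict linear order on the outcome set. -/
def PrefOrder : Prop :=
  ∀ i : ι,
    (∀ x ∈ Γ.OutcomeSet, ¬ Γ.pref i x x) ∧
    (∀ x ∈ Γ.OutcomeSet, ∀ y ∈ Γ.OutcomeSet, ∀ z ∈ Γ.OutcomeSet,
        Γ.pref i x y → Γ.pref i y z → Γ.pref i x z) ∧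
    (∀ x ∈ Γ.OutcomeSet, ∀ y ∈ Γ.OutcomeSet, x ≠ y → Γ.pref i x y ∨ Γ.pref i y x)

/-- One step of the play determined by a situation `σ` (stays put at terminals). -/
noncomputable def step (σ : V → V) (x : V) : V :=
  if Γ.Terminal x then x else σ x

/-- The position reached after `n` moves of the play starting at the initial position. -/
noncomputable def iter (σ : V → V) (n : ℕ) : V := (Γ.step σ)^[n] Γ.init

/-- The outcome `g(σ)` of a situation: the terminal at which the play from the initial
position ends, or `none` (i.e. `∞`) if the play is infinite. -/
noncomputable def outcome (σ : V → V) : Option V :=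
  if h : ∃ n, Γ.Terminal (Γ.iter σ n) then some (Γ.iter σ (Nat.find h)) else none

/-- A situation: a choice, for every non-terminal position, of a move from it.
(Values at terminal positions are irrelevant.) -/
def IsSituation (σ : V → V) : Prop := ∀ x, ¬ Γ.Terminal x → Γ.adj x (σ x)

/-- Nash equilibrium in pure stationary strategies: no player `i` can obtain a strictly
better outcome by changing his own moves only. -/
def IsNE (σ : V → V) : Prop :=
  Γ.IsSituation σ ∧
  ∀ (i : ι) (σ' : V → V), Γ.IsSituation σ' →
    (∀ x, Γ.owner x ≠ i → σ' x = σ x) →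
    ¬ Γ.pref i (Γ.outcome σ') (Γ.outcome σ)

/-- A terminal Nash equilibrium: a NE whose outcome is a terminal. -/
def IsTerminalNE (σ : V → V) : Prop := Γ.IsNE σ ∧ ∃ t, Γ.outcome σ = some t

/-- A non-terminal Nash equilibrium: a NE whose outcome is `∞`. -/
def IsNonterminalNE (σ : V → V) : Prop := Γ.IsNE σ ∧ Γ.outcome σ = none

/-- A terminal DG game: every player prefers every terminal outcome to `∞`. -/
def TerminalGame : Prop := ∀ (i : ι) (t : V), Γ.Terminal t → Γ.pref i (some t) none

/-- A play-once DG game: every player controls exactly one position. -/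
def PlayOnce : Prop := ∀ i : ι, {x | ¬ Γ.Terminal x ∧ Γ.owner x = i}.ncard = 1

/-- Reachability by a directed path. -/
def Reaches (x y : V) : Prop := Relation.ReflTransGen Γ.adj x y

end DGGame

namespace DGGame

variable {V ι : Type*}

/-- The set `S`: non-terminal positions `v` having a move to a terminal `a(v)` that the
controlling player prefers to `∞`. -/
def Sset (Γ : DGGame V ι) : Set V :=
  {x | ¬ Γ.Terminal x ∧
    ∃ t, Γ.adj x t ∧ Γ.Terminal t ∧ Γ.pref (Γ.owner x) (some t) none}

/-- The move relation of the induced subgraph `G[V∖S]`. -/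
def adjNS (Γ : DGGame V ι) (x y : V) : Prop :=
  Γ.adj x y ∧ x ∉ Γ.Sset ∧ y ∉ Γ.Sset

/-- The set `W`: positions reachable from the initial position by a directed path in
the induced subgraph `G[V∖S]`. -/
def Wset (Γ : DGGame V ι) : Set V :=
  {x | Γ.init ∉ Γ.Sset ∧ x ∉ Γ.Sset ∧ Relation.ReflTransGen Γ.adjNS Γ.init x}

/-- The move relation of the induced subgraph `G[W]`. -/
def adjW (Γ : DGGame V ι) (x y : V) : Prop :=
  Γ.adj x y ∧ x ∈ Γ.Wset ∧ y ∈ Γ.Wset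

/-- The normalization used for play-once games: every non-terminal position has a
non-terminal out-neighbour (`N⁺(v) ⊄ T`) and at most one terminal out-neighbour. -/
def Normalized (Γ : DGGame V ι) : Prop :=
  ∀ x, ¬ Γ.Terminal x →
    (∃ y, Γ.adj x y ∧ ¬ Γ.Terminal y) ∧ {y | Γ.adj x y ∧ Γ.Terminal y}.ncard ≤ 1

end DGGame

theorem exists_transGen_self_of_finite {α : Type*} {r : α → α → Prop} {s : Set α}
    (hs : s.Finite) (hne : s.Nonempty) (hr : ∀ x ∈ s, ∃ y ∈ s, r x y) :
    ∃ x, Relation.TransGen r x x := by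
  by_contra! hacyclic
  have : Std.Irrefl (Relation.TransGen r) := ⟨hacyclic⟩
  have : IsStrictOrder α (Relation.TransGen r) := {}
  have hwf : s.WellFoundedOn (Function.swap (Relation.TransGen r)) := hs.wellFoundedOn
  obtain ⟨⟨x, hx⟩, -, hmax⟩ :=
    WellFounded.has_min hwf Set.univ ⟨⟨hne.some, hne.some_mem⟩, Set.mem_univ _⟩
  obtain ⟨y, hy, hxy⟩ := hr x hx
  exact hmax ⟨y, hy⟩ (Set.mem_univ _) (.single hxy)

theorem mem_range_iterate_of_eqOn_compl {α : Type*} {f g : α → α} {a b : α}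
    (hfg : Set.EqOn f g {b}ᶜ) (hb : b ∈ Set.range fun n => f^[n] a) :
    b ∈ Set.range fun n => g^[n] a := by
  by_contra hg
  have heq : ∀ n, f^[n] a = g^[n] a := fun n => by
    induction n with
    | zero => rfl
    | succ n ih =>
      rw [Function.iterate_succ_apply', Function.iterate_succ_apply', ih]
      exact hfg fun h => hg ⟨n, h⟩
  obtain ⟨n, hn⟩ := hb
  exact hg ⟨n, (heq n).symm.trans hn⟩

namespace DGGame

variable {V ι : Type*} {Γ : DGGame V ι} {σ σ' : V → V} {v t : V} {C : Set V}

theorem step_of_terminal (hv : Γ.Terminal v) : Γ.step σ v = v := if_pos hv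

theorem step_of_not_terminal (hv : ¬ Γ.Terminal v) : Γ.step σ v = σ v := if_neg hv

theorem iter_succ (n : ℕ) : Γ.iter σ (n + 1) = Γ.step σ (Γ.iter σ n) :=
  Function.iterate_succ_apply' _ _ _

theorem apply_mem_range_iter (hv : ¬ Γ.Terminal v) (hvisit : v ∈ Set.range (Γ.iter σ)) :
    σ v ∈ Set.range (Γ.iter σ) := by
  obtain ⟨n, rfl⟩ := hvisit
  exact ⟨n + 1, by rw [iter_succ, step_of_not_terminal hv]⟩

theorem mem_range_iter_of_eq_of_ne (hσ : ∀ x, ¬ Γ.Terminal x → x ≠ v → σ x = σ' x)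
    (hvisit : v ∈ Set.range (Γ.iter σ)) : v ∈ Set.range (Γ.iter σ') := by
  refine mem_range_iterate_of_eqOn_compl (fun x hx => ?_) hvisit
  by_cases hT : Γ.Terminal x
  · rw [step_of_terminal hT, step_of_terminal hT]
  · rw [step_of_not_terminal hT, step_of_not_terminal hT, hσ x hT hx]

theorem iter_eq_of_terminal {m n : ℕ} (hmn : m ≤ n) (hm : Γ.Terminal (Γ.iter σ m)) :
    Γ.iter σ n = Γ.iter σ m := by
  induction n, hmn using Nat.le_induction with
  | base => rfl
  | succ n _ ih => rw [iter_succ, ih, step_of_terminal hm]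

theorem outcome_eq_none_iff : Γ.outcome σ = none ↔ ∀ n, ¬ Γ.Terminal (Γ.iter σ n) := by
  rw [← not_exists]
  exact dite_eq_right_iff.trans (by simp)

theorem outcome_eq_some_iff :
    Γ.outcome σ = some t ↔ Γ.Terminal t ∧ t ∈ Set.range (Γ.iter σ) := by
  constructor
  · intro h
    rw [outcome] at h
    split_ifs at h with hex
    obtain rfl := Option.some.inj h
    exact ⟨Nat.find_spec hex, Nat.find hex, rfl⟩
  · rintro ⟨ht, n, rfl⟩
    have hex : ∃ n, Γ.Terminal (Γ.iter σ n) := ⟨n, ht⟩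
    rw [outcome, dif_pos hex, iter_eq_of_terminal (Nat.find_min' hex ht) (Nat.find_spec hex)]

theorem exists_apply_eq_of_outcome_eq_some (hinit : ¬ Γ.Terminal Γ.init)
    (h : Γ.outcome σ = some t) : ∃ y ∈ Set.range (Γ.iter σ), ¬ Γ.Terminal y ∧ σ y = t := by
  obtain ⟨ht, n, rfl⟩ := outcome_eq_some_iff.1 h
  clear h
  induction n with
  | zero => exact absurd ht hinit
  | succ n ih =>
    by_cases hn : Γ.Terminal (Γ.iter σ n)
    · rw [iter_succ, step_of_terminal hn]
      exact ih hn
    · exact ⟨Γ.iter σ n, ⟨n, rfl⟩, hn, by rw [iter_succ, step_of_not_terminal hn]⟩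

theorem outcome_update_of_mem_range (hv : ¬ Γ.Terminal v) (ht : Γ.Terminal t)
    (hvisit : v ∈ Set.range (Γ.iter σ)) : Γ.outcome (Function.update σ v t) = some t := by
  have hvisit' : v ∈ Set.range (Γ.iter (Function.update σ v t)) :=
    mem_range_iter_of_eq_of_ne (fun x _ hx => (Function.update_of_ne hx t σ).symm) hvisit
  refine outcome_eq_some_iff.2 ⟨ht, ?_⟩
  simpa only [Function.update_self] using apply_mem_range_iter hv hvisit'

theorem IsSituation.update (hσ : Γ.IsSituation σ) (hvt : Γ.adj v t) :
    Γ.IsSituation (Function.update σ v t) := by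
  intro x hx
  obtain rfl | hxv := eq_or_ne x v
  · rwa [Function.update_self]
  · rw [Function.update_of_ne hxv]
    exact hσ x hx

theorem IsNonterminalNE.notMem_Sset (h : Γ.IsNonterminalNE σ)
    (hvisit : v ∈ Set.range (Γ.iter σ)) : v ∉ Γ.Sset := by
  rintro ⟨hv, t, hvt, ht, hpref⟩
  obtain ⟨⟨hσ, hne⟩, hout⟩ := h
  refine hne (Γ.owner v) (Function.update σ v t) (hσ.update hvt) (fun x hx => ?_) ?_
  · exact Function.update_of_ne (fun hxv => hx (congrArg Γ.owner hxv)) t σ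
  · rwa [outcome_update_of_mem_range hv ht hvisit, hout]

variable (Γ C) in
/-- A safe trap: a set of positions outside `S` containing the initial position, from each of which
the play can be continued inside the set. It links the non-terminal equilibria to the cycles of
`G[W]`. -/
structure IsSafeTrap : Prop where
  init_mem : Γ.init ∈ C
  notMem_Sset : ∀ x ∈ C, x ∉ Γ.Sset
  exists_adj : ∀ x ∈ C, ∃ y ∈ C, Γ.adj x y

theorem IsNonterminalNE.isSafeTrap_range (h : Γ.IsNonterminalNE σ) :
    Γ.IsSafeTrap (Set.range (Γ.iter σ)) where
  init_mem := ⟨0, rfl⟩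
  notMem_Sset _ hx := h.notMem_Sset hx
  exists_adj x hx := by
    have hT : ¬ Γ.Terminal x := by
      obtain ⟨n, rfl⟩ := hx
      exact outcome_eq_none_iff.1 h.2 n
    exact ⟨σ x, apply_mem_range_iter hT hx, h.1.1 x hT⟩

namespace IsSafeTrap

theorem not_terminal (hC : Γ.IsSafeTrap C) {x : V} (hx : x ∈ C) : ¬ Γ.Terminal x := fun hT =>
  let ⟨y, _, hxy⟩ := hC.exists_adj x hx
  hT y hxy

theorem range_iter_subset (hC : Γ.IsSafeTrap C) (hσC : Set.MapsTo σ C C) :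
    Set.range (Γ.iter σ) ⊆ C := by
  have hstep : Set.MapsTo (Γ.step σ) C C := fun x hx => by
    rw [step_of_not_terminal (hC.not_terminal hx)]
    exact hσC hx
  rintro _ ⟨n, rfl⟩
  exact hstep.iterate n hC.init_mem

theorem exists_isSituation_mapsTo (hC : Γ.IsSafeTrap C)
    (hnt : ∀ x, ¬ Γ.Terminal x → ∃ y, Γ.adj x y ∧ ¬ Γ.Terminal y) :
    ∃ σ, Γ.IsSituation σ ∧ (∀ x, ¬ Γ.Terminal x → ¬ Γ.Terminal (σ x)) ∧ Set.MapsTo σ C C := by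
  have hmove : ∀ x, ∃ y, (¬ Γ.Terminal x → Γ.adj x y ∧ ¬ Γ.Terminal y) ∧ (x ∈ C → y ∈ C) := by
    intro x
    by_cases hx : x ∈ C
    · obtain ⟨y, hy, hxy⟩ := hC.exists_adj x hx
      exact ⟨y, fun _ => ⟨hxy, hC.not_terminal hy⟩, fun _ => hy⟩
    · by_cases hT : Γ.Terminal x
      · exact ⟨x, fun h => absurd hT h, fun h => absurd h hx⟩
      · obtain ⟨y, hy⟩ := hnt x hT
        exact ⟨y, fun _ => hy, fun h => absurd h hx⟩
  choose σ hσ hσC using hmove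
  exact ⟨σ, fun x hx => (hσ x hx).1, fun x hx => (hσ x hx).2, hσC⟩

theorem isNonterminalNE (hC : Γ.IsSafeTrap C) (hirr : ∀ i, ¬ Γ.pref i none none)
    (hown : Set.InjOn Γ.owner {x | ¬ Γ.Terminal x}) (hσ : Γ.IsSituation σ)
    (hσT : ∀ x, ¬ Γ.Terminal x → ¬ Γ.Terminal (σ x)) (hσC : Set.MapsTo σ C C) :
    Γ.IsNonterminalNE σ := by
  have hplay : Set.range (Γ.iter σ) ⊆ C := hC.range_iter_subset hσC
  have hout : Γ.outcome σ = none :=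
    outcome_eq_none_iff.2 fun n => hC.not_terminal (hplay ⟨n, rfl⟩)
  refine ⟨⟨hσ, fun i σ' hσ' hdev hpref => ?_⟩, hout⟩
  rw [hout] at hpref
  cases hout' : Γ.outcome σ' with
  | none => exact hirr i (hout' ▸ hpref)
  | some t =>
    obtain ⟨y, hy, hyT, rfl⟩ :=
      exists_apply_eq_of_outcome_eq_some (hC.not_terminal hC.init_mem) hout'
    have ht : Γ.Terminal (σ' y) := (outcome_eq_some_iff.1 hout').1
    have hyi : Γ.owner y = i := by
      by_contra hne
      exact hσT y hyT (hdev y hne ▸ ht)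
    have heq : ∀ x, ¬ Γ.Terminal x → x ≠ y → σ' x = σ x := fun x hxT hxy =>
      hdev x fun hxi => hxy (hown hxT hyT (hxi.trans hyi.symm))
    have hyC : y ∈ C := hplay (mem_range_iter_of_eq_of_ne heq hy)
    rw [hout', ← hyi] at hpref
    exact hC.notMem_Sset y hyC ⟨hyT, σ' y, hσ' y hyT, ht, hpref⟩

end IsSafeTrap

theorem exists_isNonterminalNE_iff_exists_isSafeTrap (hirr : ∀ i, ¬ Γ.pref i none none)
    (hown : Set.InjOn Γ.owner {x | ¬ Γ.Terminal x})
    (hnt : ∀ x, ¬ Γ.Terminal x → ∃ y, Γ.adj x y ∧ ¬ Γ.Terminal y) :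
    (∃ σ, Γ.IsNonterminalNE σ) ↔ ∃ C, Γ.IsSafeTrap C := by
  constructor
  · rintro ⟨σ, hσ⟩
    exact ⟨_, hσ.isSafeTrap_range⟩
  · rintro ⟨C, hC⟩
    obtain ⟨σ, hσ, hσT, hσC⟩ := hC.exists_isSituation_mapsTo hnt
    exact ⟨σ, hC.isNonterminalNE hirr hown hσ hσT hσC⟩

theorem IsSafeTrap.exists_transGen_adjW (hC : Γ.IsSafeTrap C) (hW : Γ.Wset.Finite) :
    ∃ x, Relation.TransGen Γ.adjW x x := by
  have hinit : Γ.init ∉ Γ.Sset := hC.notMem_Sset _ hC.init_mem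
  refine exists_transGen_self_of_finite (hW.subset Set.inter_subset_right)
    ⟨Γ.init, hC.init_mem, hinit, hinit, .refl⟩ fun x ⟨hxC, hxW⟩ => ?_
  obtain ⟨y, hyC, hxy⟩ := hC.exists_adj x hxC
  have hyS : y ∉ Γ.Sset := hC.notMem_Sset y hyC
  have hyW : y ∈ Γ.Wset := ⟨hinit, hyS, hxW.2.2.tail ⟨hxy, hxW.2.1, hyS⟩⟩
  exact ⟨y, ⟨hyC, hyW⟩, hxy, hxW, hyW⟩

theorem isSafeTrap_setOf_reflTransGen_adjNS (hv : v ∈ Γ.Wset)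
    (hcycle : Relation.TransGen Γ.adjNS v v) :
    Γ.IsSafeTrap {y | Relation.ReflTransGen Γ.adjNS y v} := by
  have hmove : ∀ y, Relation.ReflTransGen Γ.adjNS y v →
      ∃ z, Γ.adjNS y z ∧ Relation.ReflTransGen Γ.adjNS z v := fun y hy =>
    Relation.TransGen.head'_iff.1 (.trans_right hy hcycle)
  refine ⟨hv.2.2, fun y hy => ?_, fun y hy => ?_⟩ <;> obtain ⟨z, hyz, hzv⟩ := hmove y hy
  · exact hyz.2.1
  · exact ⟨z, hzv, hyz.1⟩

theorem exists_isSafeTrap_iff_exists_transGen_adjW (hW : Γ.Wset.Finite) :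
    (∃ C, Γ.IsSafeTrap C) ↔ ∃ x, Relation.TransGen Γ.adjW x x := by
  constructor
  · rintro ⟨C, hC⟩
    exact hC.exists_transGen_adjW hW
  · rintro ⟨x, hx⟩
    have hxW : x ∈ Γ.Wset :=
      let ⟨_, hxy, _⟩ := Relation.TransGen.head'_iff.1 hx
      hxy.2.1
    have hcycle : Relation.TransGen Γ.adjNS x x :=
      Relation.TransGen.mono (fun _ _ h => ⟨h.1, h.2.1.2.1, h.2.2.2.1⟩) _ _ hx
    exact ⟨_, isSafeTrap_setOf_reflTransGen_adjNS hxW hcycle⟩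

theorem PlayOnce.injOn_owner (hpo : Γ.PlayOnce) :
    Set.InjOn Γ.owner {x | ¬ Γ.Terminal x} := by
  intro x hx y hy hxy
  obtain ⟨a, ha⟩ := Set.ncard_eq_one.1 (hpo (Γ.owner y))
  have hxa : x = a := ha.subset ⟨hx, hxy⟩
  have hya : y = a := ha.subset ⟨hy, rfl⟩
  exact hxa.trans hya.symm

end DGGame

theorem stmt12_general {V ι : Type*} (Γ : DGGame V ι) (hW : Γ.Wset.Finite)
    (hirr : ∀ i, ¬ Γ.pref i none none) (hown : Set.InjOn Γ.owner {x | ¬ Γ.Terminal x})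
    (hnt : ∀ x, ¬ Γ.Terminal x → ∃ y, Γ.adj x y ∧ ¬ Γ.Terminal y) :
    (∃ σ : V → V, Γ.IsNonterminalNE σ) ↔ ∃ x, Relation.TransGen Γ.adjW x x :=
  (DGGame.exists_isNonterminalNE_iff_exists_isSafeTrap hirr hown hnt).trans
    (DGGame.exists_isSafeTrap_iff_exists_transGen_adjW hW)

/-- A normalized play-once DG game has a non-terminal Nash equilibrium if and only if
the induced subgraph `G[W]` contains a directed cycle. -/
theorem stmt12 {V ι : Type*} [Finite V] (Γ : DGGame V ι)
    (hinit : ¬ Γ.Terminal Γ.init) (hpref : Γ.PrefOrder)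
    (hpo : Γ.PlayOnce) (hnorm : Γ.Normalized) :
    (∃ σ : V → V, Γ.IsNonterminalNE σ) ↔ ∃ x, Relation.TransGen Γ.adjW x x :=
  stmt12_general Γ (Set.toFinite _) (fun i => (hpref i).1 none (.inl rfl)) hpo.injOn_owner
    fun x hx => (hnorm x hx).1
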